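/- For every L_⊳-formula φ: φ ∈ ICK ⊕ ((p → q) → (p ⊳ q)) if and only if φ is valid on every conditional Kripke frame (X, ≤, 𝓡) satisfying R_a[x] ⊆ ↑x ∩ a for all worlds x ∈ X and all upsets a. -/

import Mathlib

/-! ## The conditional language `L_⊳` -/

/-- Formulas of the conditional language `L_⊳`, with proposition letters
indexed by the countable set `ℕ`. -/
inductive CForm : Type where
  | var : ℕ → CForm
  | bot : CForm
  | and : CForm → CForm → CForm
  | or : CForm → CForm → CForm
  | imp : CForm → CForm → CForm
  | cond : CForm → CForm → CForm

/-- `⊤ := ⊥ → ⊥`. -/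
def cTop : CForm := CForm.imp CForm.bot CForm.bot

/-- `φ ↔ ψ := (φ → ψ) ∧ (ψ → φ)`. -/
def cIff (φ ψ : CForm) : CForm := CForm.and (CForm.imp φ ψ) (CForm.imp ψ φ)

/-- Uniform substitution of formulas for proposition letters. -/
def psubst (σ : ℕ → CForm) : CForm → CForm
  | CForm.var q => σ q
  | CForm.bot => CForm.bot
  | CForm.and φ ψ => CForm.and (psubst σ φ) (psubst σ ψ)
  | CForm.or φ ψ => CForm.or (psubst σ φ) (psubst σ ψ)
  | CForm.imp φ ψ => CForm.imp (psubst σ φ) (psubst σ ψ)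
  | CForm.cond φ ψ => CForm.cond (psubst σ φ) (psubst σ ψ)

/-- The logic `ICK ⊕ Γ`: the smallest set of `L_⊳`-formulas containing an
axiomatisation of intuitionistic propositional logic, the formulas of `Γ`, the
axioms `(k_c)` and `(n_c)`, closed under uniform substitution, modus ponens and
the two congruence rules. -/
inductive ICK (Γ : Set CForm) : CForm → Prop where
  | prem {φ : CForm} : φ ∈ Γ → ICK Γ φ
  | a1 : ICK Γ (CForm.imp (CForm.and (CForm.var 0) (CForm.var 1)) (CForm.var 0))
  | a2 : ICK Γ (CForm.imp (CForm.and (CForm.var 0) (CForm.var 1)) (CForm.var 1))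
  | a3 : ICK Γ (CForm.imp (CForm.imp (CForm.var 0) (CForm.var 1))
      (CForm.imp (CForm.imp (CForm.var 0) (CForm.var 2))
        (CForm.imp (CForm.var 0) (CForm.and (CForm.var 1) (CForm.var 2)))))
  | a4 : ICK Γ (CForm.imp (CForm.var 0) (CForm.or (CForm.var 0) (CForm.var 1)))
  | a5 : ICK Γ (CForm.imp (CForm.var 1) (CForm.or (CForm.var 0) (CForm.var 1)))
  | a6 : ICK Γ (CForm.imp (CForm.imp (CForm.var 0) (CForm.var 2))
      (CForm.imp (CForm.imp (CForm.var 1) (CForm.var 2))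
        (CForm.imp (CForm.or (CForm.var 0) (CForm.var 1)) (CForm.var 2))))
  | a7 : ICK Γ (CForm.imp CForm.bot (CForm.var 0))
  | a8 : ICK Γ (CForm.imp (CForm.var 0) (CForm.imp (CForm.var 1) (CForm.var 0)))
  | a9 : ICK Γ (CForm.imp
      (CForm.imp (CForm.var 0) (CForm.imp (CForm.var 1) (CForm.var 2)))
      (CForm.imp (CForm.imp (CForm.var 0) (CForm.var 1))
        (CForm.imp (CForm.var 0) (CForm.var 2))))
  | kc : ICK Γ (cIff (CForm.cond (CForm.var 0) (CForm.and (CForm.var 1) (CForm.var 2)))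
      (CForm.and (CForm.cond (CForm.var 0) (CForm.var 1))
        (CForm.cond (CForm.var 0) (CForm.var 2))))
  | nc : ICK Γ (cIff (CForm.cond (CForm.var 0) cTop) cTop)
  | subst {φ : CForm} (σ : ℕ → CForm) : ICK Γ φ → ICK Γ (psubst σ φ)
  | mp {φ ψ : CForm} : ICK Γ (CForm.imp φ ψ) → ICK Γ φ → ICK Γ ψ
  | congL {φ ψ χ : CForm} :
      ICK Γ (cIff φ ψ) → ICK Γ (cIff (CForm.cond φ χ) (CForm.cond ψ χ))
  | congR {φ ψ χ : CForm} :
      ICK Γ (cIff φ ψ) → ICK Γ (cIff (CForm.cond χ φ) (CForm.cond χ ψ))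

/-! ## Conditional Kripke frames and semantics -/

/-- `a` is an upset (upward closed set) w.r.t. the relation `le`. -/
def IsUpset {X : Type} (le : X → X → Prop) (a : Set X) : Prop :=
  ∀ ⦃x y : X⦄, le x y → x ∈ a → y ∈ a

/-- The upward closure `↑s` of a set `s` w.r.t. the relation `le`. -/
def upCl {X : Type} (le : X → X → Prop) (s : Set X) : Set X :=
  {z | ∃ y ∈ s, le y z}

/-- Truth sets of `L_⊳`-formulas, by intuitionistic Kripke semantics for the
propositional connectives, where `x ⊨ φ ⊳ ψ` iff every `y` with
`x R_{V(φ)} y` satisfies `ψ` (here `V(φ)` is the truth set of `φ`). -/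
def csat {X : Type} (le : X → X → Prop) (R : Set X → X → X → Prop)
    (V : ℕ → Set X) : CForm → Set X
  | CForm.var p => V p
  | CForm.bot => ∅
  | CForm.and φ ψ => csat le R V φ ∩ csat le R V ψ
  | CForm.or φ ψ => csat le R V φ ∪ csat le R V ψ
  | CForm.imp φ ψ => {x | ∀ y, le x y → y ∈ csat le R V φ → y ∈ csat le R V ψ}
  | CForm.cond φ ψ => {x | ∀ y, R (csat le R V φ) x y → y ∈ csat le R V ψ}

/-- A conditional Kripke frame: a nonempty preordered set `(X, le)` with a
family of relations `R a` (indexed by the upsets `a`) satisfying the coherence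
condition `(≤ ∘ R_a) ⊆ (R_a ∘ ≤)`. -/
structure CondFrame where
  X : Type
  ne : Nonempty X
  le : X → X → Prop
  le_refl : ∀ x, le x x
  le_trans : ∀ ⦃x y z⦄, le x y → le y z → le x z
  R : Set X → X → X → Prop
  coh : ∀ a : Set X, IsUpset le a →
    ∀ ⦃x y z⦄, le x y → R a y z → ∃ w, R a x w ∧ le w z

/-- Validity on a conditional Kripke frame: truth at every world under every
valuation of the proposition letters by upsets. -/
def CondFrame.valid (F : CondFrame) (φ : CForm) : Prop :=
  ∀ V : ℕ → Set F.X, (∀ p, IsUpset F.le (V p)) → ∀ x, x ∈ csat F.le F.R V φ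

/-! ## Conditional Heyting algebras -/

/-- A conditional Heyting algebra: a Heyting algebra with a binary operation
`cond` (written `⊳` in the paper) preserving finite meets in its second
argument. -/
class CondHeyting (A : Type) extends HeytingAlgebra A where
  cond : A → A → A
  cond_inf : ∀ a b c : A, cond a (b ⊓ c) = cond a b ⊓ cond a c
  cond_top : ∀ a : A, cond a ⊤ = ⊤

/-- Evaluation of an `L_⊳`-formula in a conditional Heyting algebra under an
assignment `σ` of the proposition letters. -/
def evalCHA {A : Type} [CondHeyting A] (σ : ℕ → A) : CForm → A
  | CForm.var p => σ p
  | CForm.bot => ⊥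
  | CForm.and φ ψ => evalCHA σ φ ⊓ evalCHA σ ψ
  | CForm.or φ ψ => evalCHA σ φ ⊔ evalCHA σ ψ
  | CForm.imp φ ψ => evalCHA σ φ ⇨ evalCHA σ ψ
  | CForm.cond φ ψ => CondHeyting.cond (evalCHA σ φ) (evalCHA σ ψ)

/-- A formula is satisfied in a conditional Heyting algebra if it evaluates to
`⊤` under every assignment. -/
def chaSat (A : Type) [CondHeyting A] (φ : CForm) : Prop :=
  ∀ σ : ℕ → A, evalCHA σ φ = ⊤

/-- A prime filter: a proper, nonempty, upward closed subset, closed under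
binary meets, such that `a ⊔ b ∈ x` implies `a ∈ x` or `b ∈ x`. -/
def IsPrimeFilter {A : Type} [Lattice A] (x : Set A) : Prop :=
  x.Nonempty ∧ x ≠ Set.univ ∧
  (∀ ⦃a b : A⦄, a ∈ x → a ≤ b → b ∈ x) ∧
  (∀ ⦃a b : A⦄, a ∈ x → b ∈ x → a ⊓ b ∈ x) ∧
  (∀ ⦃a b : A⦄, a ⊔ b ∈ x → a ∈ x ∨ b ∈ x)

/-! ## General conditional frames -/

/-- A general conditional frame `(X, ≤, 𝓡, A)`. -/
structure GenFrame where
  X : Type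
  le : X → X → Prop
  le_refl : ∀ x, le x x
  le_trans : ∀ ⦃x y z⦄, le x y → le y z → le x z
  le_antisymm : ∀ ⦃x y⦄, le x y → le y x → x = y
  A : Set (Set X)
  upA : ∀ a ∈ A, IsUpset le a
  univ_mem : Set.univ ∈ A
  empty_mem : ∅ ∈ A
  inter_mem : ∀ a ∈ A, ∀ b ∈ A, a ∩ b ∈ A
  union_mem : ∀ a ∈ A, ∀ b ∈ A, a ∪ b ∈ A
  R : Set X → X → X → Prop
  himp_mem : ∀ a ∈ A, ∀ b ∈ A, {x | ∀ y, le x y → y ∈ a → y ∈ b} ∈ A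
  cimp_mem : ∀ a ∈ A, ∀ b ∈ A, {x | ∀ y, R a x y → y ∈ b} ∈ A
  coh : ∀ a ∈ A, ∀ ⦃x y z⦄, le x y → R a y z → ∃ w, R a x w ∧ le w z

/-- The carrier of the complex algebra of a general frame: the admissible
upsets. -/
def GenFrame.AUp (G : GenFrame) : Type := {a : Set G.X // a ∈ G.A}

instance GenFrame.instLatticeAUp (G : GenFrame) : Lattice G.AUp where
  le a b := a.val ⊆ b.val
  le_refl a := subset_rfl
  le_trans a b c h h' := Set.Subset.trans h h'
  le_antisymm a b h h' := Subtype.ext (subset_antisymm h h')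
  sup a b := ⟨a.val ∪ b.val, G.union_mem _ a.2 _ b.2⟩
  le_sup_left a b := Set.subset_union_left
  le_sup_right a b := Set.subset_union_right
  sup_le a b c h h' := Set.union_subset h h'
  inf a b := ⟨a.val ∩ b.val, G.inter_mem _ a.2 _ b.2⟩
  inf_le_left a b := Set.inter_subset_left
  inf_le_right a b := Set.inter_subset_right
  le_inf a b c h h' := Set.subset_inter h h'

instance GenFrame.instHeytingAUp (G : GenFrame) : HeytingAlgebra G.AUp :=
  { GenFrame.instLatticeAUp G with
    top := ⟨Set.univ, G.univ_mem⟩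
    le_top := fun a => Set.subset_univ _
    bot := ⟨∅, G.empty_mem⟩
    bot_le := fun a => Set.empty_subset _
    himp := fun a b => ⟨{x | ∀ y, G.le x y → y ∈ a.val → y ∈ b.val},
      G.himp_mem _ a.2 _ b.2⟩
    compl := fun a => ⟨{x | ∀ y, G.le x y → y ∈ a.val → y ∈ (∅ : Set G.X)},
      G.himp_mem _ a.2 _ G.empty_mem⟩
    le_himp_iff := by
      intro a b c
      show a.val ⊆ {x | ∀ y, G.le x y → y ∈ b.val → y ∈ c.val} ↔
        a.val ∩ b.val ⊆ c.val
      constructor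
      · rintro h x ⟨hxa, hxb⟩
        exact h hxa x (G.le_refl x) hxb
      · intro h x hxa y hle hyb
        exact h ⟨G.upA a.val a.2 hle hxa, hyb⟩
    himp_bot := fun a => rfl }

/-- The complex algebra `AUp(G)` of a general frame `G` is a conditional
Heyting algebra, with `a ⊳ b := {x | R_a[x] ⊆ b}`. -/
instance GenFrame.instCondHeytingAUp (G : GenFrame) : CondHeyting G.AUp where
  cond a b := ⟨{x | ∀ y, G.R a.val x y → y ∈ b.val}, G.cimp_mem _ a.2 _ b.2⟩
  cond_inf a b c := Subtype.ext (Set.ext fun x => by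
    show (∀ y, G.R a.val x y → y ∈ b.val ∩ c.val) ↔
      (∀ y, G.R a.val x y → y ∈ b.val) ∧ (∀ y, G.R a.val x y → y ∈ c.val)
    constructor
    · intro h
      exact ⟨fun y hy => (h y hy).1, fun y hy => (h y hy).2⟩
    · rintro ⟨h1, h2⟩ y hy
      exact ⟨h1 y hy, h2 y hy⟩)
  cond_top a := Subtype.ext (Set.ext fun x => by
    show (∀ y, G.R a.val x y → y ∈ (Set.univ : Set G.X)) ↔
      x ∈ (Set.univ : Set G.X)
    exact ⟨fun _ => trivial, fun _ y _ => trivial⟩)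

/-! ## Conditional Esakia spaces -/

/-- A conditional Esakia space: an Esakia space `(X, le, top)` together with a
family of relations `R a` indexed by the clopen upsets `a`, such that
`{x | R_a[x] ⊆ b}` is clopen for clopen upsets `a, b`, each `R_a[x]` is
closed, and `(≤ ∘ R_a ∘ ≤) = R_a`. -/
structure CondEsakia where
  X : Type
  ne : Nonempty X
  le : X → X → Prop
  le_refl : ∀ x, le x x
  le_trans : ∀ ⦃x y z⦄, le x y → le y z → le x z
  le_antisymm : ∀ ⦃x y⦄, le x y → le y x → x = y
  top : TopologicalSpace X
  compact : @CompactSpace X top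
  sep : ∀ x y : X, ¬ le x y →
    ∃ a : Set X, @IsClopen X top a ∧ IsUpset le a ∧ x ∈ a ∧ y ∉ a
  down_clopen : ∀ a : Set X, @IsClopen X top a →
    @IsClopen X top {x | ∃ y ∈ a, le x y}
  R : Set X → X → X → Prop
  box_clopen : ∀ a b : Set X, @IsClopen X top a → IsUpset le a →
    @IsClopen X top b → IsUpset le b →
    @IsClopen X top {x | ∀ y, R a x y → y ∈ b}
  coh : ∀ a : Set X, @IsClopen X top a → IsUpset le a →
    ∀ x z : X, (∃ x' y', le x x' ∧ R a x' y' ∧ le y' z) ↔ R a x z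
  im_closed : ∀ a : Set X, @IsClopen X top a → IsUpset le a →
    ∀ x : X, @IsClosed X top {y | R a x y}

/-- `a` is a clopen upset of the conditional Esakia space `S`. -/
def CondEsakia.ClopUp (S : CondEsakia) (a : Set S.X) : Prop :=
  @IsClopen S.X S.top a ∧ IsUpset S.le a

/-- Validity on a conditional Esakia space: truth at every world under every
valuation of the proposition letters by clopen upsets. -/
def CondEsakia.valid (S : CondEsakia) (φ : CForm) : Prop :=
  ∀ V : ℕ → Set S.X, (∀ p, S.ClopUp (V p)) → ∀ x, x ∈ csat S.le S.R V φ

/-- The family of relations of the empty fill-in `κ_∅(S)`: it agrees with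
`S.R` on clopen upsets and is empty on all other sets. -/
def CondEsakia.emptyFill (S : CondEsakia) : Set S.X → S.X → S.X → Prop :=
  fun a x y => S.ClopUp a ∧ S.R a x y

/-- Validity on the empty fill-in `κ_∅(S)`, a conditional Kripke frame:
truth at every world under every valuation by (arbitrary) upsets. -/
def CondEsakia.emptyFillValid (S : CondEsakia) (φ : CForm) : Prop :=
  ∀ V : ℕ → Set S.X, (∀ p, IsUpset S.le (V p)) →
    ∀ x, x ∈ csat S.le S.emptyFill V φ

/-! ## The modal language `L_□` -/

/-- Formulas of the modal language `L_□`. -/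
inductive MForm : Type where
  | var : ℕ → MForm
  | bot : MForm
  | and : MForm → MForm → MForm
  | or : MForm → MForm → MForm
  | imp : MForm → MForm → MForm
  | box : MForm → MForm

/-- The translation `(−)^p : L_□ → L_⊳`: it fixes proposition letters, `⊥`,
`∧`, `∨`, `→`, and sends `□ψ` to `p ⊳ ψ^p`. -/
def MForm.transl (p : ℕ) : MForm → CForm
  | MForm.var q => CForm.var q
  | MForm.bot => CForm.bot
  | MForm.and φ ψ => CForm.and (φ.transl p) (ψ.transl p)
  | MForm.or φ ψ => CForm.or (φ.transl p) (ψ.transl p)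
  | MForm.imp φ ψ => CForm.imp (φ.transl p) (ψ.transl p)
  | MForm.box φ => CForm.cond (CForm.var p) (φ.transl p)

/-- The proposition letter `p` occurs (as a subformula) in a modal formula. -/
def MForm.occurs (p : ℕ) : MForm → Prop
  | MForm.var q => p = q
  | MForm.bot => False
  | MForm.and φ ψ => φ.occurs p ∨ ψ.occurs p
  | MForm.or φ ψ => φ.occurs p ∨ ψ.occurs p
  | MForm.imp φ ψ => φ.occurs p ∨ ψ.occurs p
  | MForm.box φ => φ.occurs p

/-- Truth sets of `L_□`-formulas in a modal model, by intuitionistic Kripke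
semantics with `x ⊨ □φ` iff every `y` with `x R y` satisfies `φ`. -/
def msat {X : Type} (le : X → X → Prop) (R : X → X → Prop)
    (V : ℕ → Set X) : MForm → Set X
  | MForm.var p => V p
  | MForm.bot => ∅
  | MForm.and φ ψ => msat le R V φ ∩ msat le R V ψ
  | MForm.or φ ψ => msat le R V φ ∪ msat le R V ψ
  | MForm.imp φ ψ => {x | ∀ y, le x y → y ∈ msat le R V φ → y ∈ msat le R V ψ}
  | MForm.box φ => {x | ∀ y, R x y → y ∈ msat le R V φ}

/-- A modal Esakia space: an Esakia space with a relation `R` such that each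
`R[x]` is closed and `R = (≤ ∘ R ∘ ≤)`. -/
structure ModalEsakia where
  X : Type
  ne : Nonempty X
  le : X → X → Prop
  le_refl : ∀ x, le x x
  le_trans : ∀ ⦃x y z⦄, le x y → le y z → le x z
  le_antisymm : ∀ ⦃x y⦄, le x y → le y x → x = y
  top : TopologicalSpace X
  compact : @CompactSpace X top
  sep : ∀ x y : X, ¬ le x y →
    ∃ a : Set X, @IsClopen X top a ∧ IsUpset le a ∧ x ∈ a ∧ y ∉ a
  down_clopen : ∀ a : Set X, @IsClopen X top a →
    @IsClopen X top {x | ∃ y ∈ a, le x y}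
  R : X → X → Prop
  im_closed : ∀ x : X, @IsClosed X top {y | R x y}
  coh : ∀ x z : X, (∃ x' y', le x x' ∧ R x' y' ∧ le y' z) ↔ R x z

/-- Validity on a modal Esakia space: truth everywhere under every valuation
by clopen upsets. -/
def ModalEsakia.valid (M : ModalEsakia) (φ : MForm) : Prop :=
  ∀ V : ℕ → Set M.X, (∀ p, @IsClopen M.X M.top (V p) ∧ IsUpset M.le (V p)) →
    ∀ x, x ∈ msat M.le M.R V φ

/-- Validity on the underlying modal frame `κ(M)` of a modal Esakia space:
truth everywhere under every valuation by arbitrary upsets. -/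
def ModalEsakia.frameValid (M : ModalEsakia) (φ : MForm) : Prop :=
  ∀ V : ℕ → Set M.X, (∀ p, IsUpset M.le (V p)) → ∀ x, x ∈ msat M.le M.R V φ

/-- An `L_□`-formula is d-persistent if its validity on a modal Esakia space
implies its validity on the underlying modal frame. -/
def DPersistent (φ : MForm) : Prop :=
  ∀ M : ModalEsakia, M.valid φ → M.frameValid φ

/-- The strength axiom `(str)  (p → q) → (p ⊳ q)`. -/
def axStr : CForm :=
  CForm.imp (CForm.imp (CForm.var 0) (CForm.var 1))
    (CForm.cond (CForm.var 0) (CForm.var 1))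

/-! Completeness is by a canonical model of prime theories. A world `y` is accessible from `x` along
the truth set of `φ` when `ψ ∈ y` for all `φ ⊳ ψ ∈ x`, while along any set that is not the truth set
of a formula no world is accessible. Such sets therefore impose nothing on the frame, and along the
truth set of `φ` the strength axiom gives both inclusions: each `ψ ∈ x` yields `φ ⊳ ψ ∈ x`, so
`x ⊆ y`, and `φ ⊳ φ` is a theorem, so `φ ∈ y`. -/

/-! ## Soundness -/

namespace CondFrame

/-- The frame condition `R_a[x] ⊆ ↑x ∩ a` corresponding to the strength axiom. -/
def IsStrong (F : CondFrame) : Prop :=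
  ∀ (x : F.X) (a : Set F.X), IsUpset F.le a → ∀ y, F.R a x y → F.le x y ∧ y ∈ a

variable {F : CondFrame} {V : ℕ → Set F.X} {φ ψ : CForm}

theorem isUpset_csat (hV : ∀ p, IsUpset F.le (V p)) (φ : CForm) :
    IsUpset F.le (csat F.le F.R V φ) := by
  induction φ with
  | var p => exact hV p
  | bot => exact fun _ _ _ hx => hx
  | and φ ψ ihφ ihψ => exact fun x y hxy hx => ⟨ihφ hxy hx.1, ihψ hxy hx.2⟩
  | or φ ψ ihφ ihψ => exact fun x y hxy hx => hx.imp (ihφ hxy) (ihψ hxy)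
  | imp φ ψ => exact fun x y hxy hx z hyz => hx z (F.le_trans hxy hyz)
  | cond φ ψ ihφ ihψ =>
    intro x y hxy hx z hyz
    obtain ⟨w, hxw, hwz⟩ := F.coh _ ihφ hxy hyz
    exact ihψ hwz (hx w hxw)

theorem valid_imp_iff :
    F.valid (.imp φ ψ) ↔
      ∀ V : ℕ → Set F.X, (∀ p, IsUpset F.le (V p)) → csat F.le F.R V φ ⊆ csat F.le F.R V ψ :=
  ⟨fun h V hV x hx => h V hV x x (F.le_refl x) hx, fun h V hV _ _ _ hy => h V hV hy⟩

theorem valid_cIff_iff :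
    F.valid (cIff φ ψ) ↔
      ∀ V : ℕ → Set F.X, (∀ p, IsUpset F.le (V p)) → csat F.le F.R V φ = csat F.le F.R V ψ :=
  ⟨fun h V hV => (valid_imp_iff.1 (fun V hV x => (h V hV x).1) V hV).antisymm
      (valid_imp_iff.1 (fun V hV x => (h V hV x).2) V hV),
    fun h V hV x => ⟨valid_imp_iff.2 (fun V hV => (h V hV).subset) V hV x,
      valid_imp_iff.2 (fun V hV => (h V hV).superset) V hV x⟩⟩

theorem IsStrong.valid_axStr (hF : F.IsStrong) : F.valid axStr :=
  valid_imp_iff.2 fun V hV x hx y hxy =>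
    let ⟨hle, hy⟩ := hF x (V 0) (hV 0) y hxy
    hx y hle hy

end CondFrame

theorem csat_psubst {X : Type} (le : X → X → Prop) (R : Set X → X → X → Prop) (V : ℕ → Set X)
    (σ : ℕ → CForm) (φ : CForm) :
    csat le R V (psubst σ φ) = csat le R (fun p => csat le R V (σ p)) φ := by
  induction φ with
  | var | bot => rfl
  | and _ _ ihφ ihψ | or _ _ ihφ ihψ | imp _ _ ihφ ihψ | cond _ _ ihφ ihψ =>
    simp only [psubst, csat, ihφ, ihψ]

open CondFrame in
theorem ICK.sound {Γ : Set CForm} {φ : CForm} {F : CondFrame} (h : ICK Γ φ)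
    (hΓ : ∀ γ ∈ Γ, F.valid γ) : F.valid φ := by
  induction h with
  | prem h => exact hΓ _ h
  | a1 => exact valid_imp_iff.2 fun _ _ _ hx => hx.1
  | a2 => exact valid_imp_iff.2 fun _ _ _ hx => hx.2
  | a3 =>
    exact valid_imp_iff.2 fun _ _ _ hx _ hxy hy z hyz hz =>
      ⟨hx z (F.le_trans hxy hyz) hz, hy z hyz hz⟩
  | a4 => exact valid_imp_iff.2 fun _ _ _ hx => Or.inl hx
  | a5 => exact valid_imp_iff.2 fun _ _ _ hx => Or.inr hx
  | a6 =>
    exact valid_imp_iff.2 fun _ _ _ hx _ hxy hy z hyz hz =>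
      hz.elim (hx z (F.le_trans hxy hyz)) (hy z hyz)
  | a7 => exact valid_imp_iff.2 fun _ _ _ hx => hx.elim
  | a8 => exact valid_imp_iff.2 fun _ hV _ hx _ hxy _ => hV 0 hxy hx
  | a9 =>
    exact valid_imp_iff.2 fun _ _ _ hx _ hxy hy z hyz hz =>
      hx z (F.le_trans hxy hyz) hz z (F.le_refl z) (hy z hyz hz)
  | kc => exact valid_cIff_iff.2 fun _ _ => Set.ext fun _ => forall₂_and
  | nc => exact valid_cIff_iff.2 fun _ _ => Set.ext fun _ => ⟨fun _ _ _ => id, fun _ _ _ _ _ => id⟩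
  | subst σ _ ih =>
    intro V hV x
    rw [csat_psubst]
    exact ih _ (fun p => isUpset_csat hV (σ p)) x
  | mp _ _ ihimp ih => exact fun V hV x => valid_imp_iff.1 ihimp V hV (ih V hV x)
  | congL _ ih | congR _ ih =>
    exact valid_cIff_iff.2 fun V hV => by simp only [csat, valid_cIff_iff.1 ih V hV]

/-! ## Theories -/

namespace ICK

/-- The substitution of `φ`, `ψ` for the letters `0`, `1` and of `χ` for all others, which
instantiates the axioms of `ICK`. -/
def axiomSubst (φ ψ χ : CForm) : ℕ → CForm
  | 0 => φ
  | 1 => ψ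
  | _ => χ

variable {Γ : Set CForm} (φ ψ χ : CForm)

theorem and_imp_left : ICK Γ (.imp (.and φ ψ) φ) := subst (axiomSubst φ ψ ψ) a1

theorem and_imp_right : ICK Γ (.imp (.and φ ψ) ψ) := subst (axiomSubst φ ψ ψ) a2

theorem imp_and : ICK Γ (.imp (.imp φ ψ) (.imp (.imp φ χ) (.imp φ (.and ψ χ)))) :=
  subst (axiomSubst φ ψ χ) a3

theorem imp_or_left : ICK Γ (.imp φ (.or φ ψ)) := subst (axiomSubst φ ψ ψ) a4

theorem imp_or_right : ICK Γ (.imp ψ (.or φ ψ)) := subst (axiomSubst φ ψ ψ) a5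

theorem or_imp : ICK Γ (.imp (.imp φ χ) (.imp (.imp ψ χ) (.imp (.or φ ψ) χ))) :=
  subst (axiomSubst φ ψ χ) a6

theorem bot_imp : ICK Γ (.imp .bot φ) := subst (axiomSubst φ φ φ) a7

theorem imp_imp_left : ICK Γ (.imp φ (.imp ψ φ)) := subst (axiomSubst φ ψ ψ) a8

theorem imp_distrib : ICK Γ (.imp (.imp φ (.imp ψ χ)) (.imp (.imp φ ψ) (.imp φ χ))) :=
  subst (axiomSubst φ ψ χ) a9

theorem cond_and : ICK Γ (cIff (.cond φ (.and ψ χ)) (.and (.cond φ ψ) (.cond φ χ))) :=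
  subst (axiomSubst φ ψ χ) kc

theorem cond_top : ICK Γ (cIff (.cond φ cTop) cTop) := subst (axiomSubst φ φ φ) nc

theorem imp_cond (h : axStr ∈ Γ) : ICK Γ (.imp (.imp φ ψ) (.cond φ ψ)) :=
  subst (axiomSubst φ ψ ψ) (prem h)

end ICK

/-- A `Γ`-theory: a set of formulas that contains `ICK ⊕ Γ` and is closed under modus ponens. -/
structure IsTheory (Γ T : Set CForm) : Prop where
  mem_of_ick : ∀ {φ}, ICK Γ φ → φ ∈ T
  mp : ∀ {φ ψ}, CForm.imp φ ψ ∈ T → φ ∈ T → ψ ∈ T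

theorem isTheory_ick (Γ : Set CForm) : IsTheory Γ {φ | ICK Γ φ} := ⟨id, .mp⟩

namespace IsTheory

variable {Γ T : Set CForm} {φ ψ χ : CForm}

theorem imp_mem_of_mem (hT : IsTheory Γ T) (h : ψ ∈ T) : .imp φ ψ ∈ T :=
  hT.mp (hT.mem_of_ick (.imp_imp_left ψ φ)) h

theorem imp_self_mem (hT : IsTheory Γ T) : .imp φ φ ∈ T :=
  hT.mem_of_ick (((ICK.imp_distrib φ (.imp φ φ) φ).mp (.imp_imp_left φ _)).mp (.imp_imp_left φ φ))

theorem setOf_imp_mem (hT : IsTheory Γ T) (φ : CForm) : IsTheory Γ {ψ | .imp φ ψ ∈ T} where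
  mem_of_ick h := hT.imp_mem_of_mem (hT.mem_of_ick h)
  mp himp h := hT.mp (hT.mp (hT.mem_of_ick (.imp_distrib φ _ _)) himp) h

theorem and_mem_iff (hT : IsTheory Γ T) : .and φ ψ ∈ T ↔ φ ∈ T ∧ ψ ∈ T :=
  ⟨fun h => ⟨hT.mp (hT.mem_of_ick (.and_imp_left φ ψ)) h,
      hT.mp (hT.mem_of_ick (.and_imp_right φ ψ)) h⟩,
    fun ⟨hφ, hψ⟩ => hT.mp (hT.mp (hT.mp (hT.mem_of_ick (.imp_and φ φ ψ)) hT.imp_self_mem)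
      (hT.imp_mem_of_mem hψ)) hφ⟩

theorem cIff_mem_iff (hT : IsTheory Γ T) : cIff φ ψ ∈ T ↔ .imp φ ψ ∈ T ∧ .imp ψ φ ∈ T :=
  hT.and_mem_iff

theorem mem_congr (hT : IsTheory Γ T) (h : ICK Γ (cIff φ ψ)) : φ ∈ T ↔ ψ ∈ T :=
  let ⟨hφψ, hψφ⟩ := hT.cIff_mem_iff.1 (hT.mem_of_ick h)
  ⟨hT.mp hφψ, hT.mp hψφ⟩

theorem cond_and_mem_iff (hT : IsTheory Γ T) :
    .cond φ (.and ψ χ) ∈ T ↔ .cond φ ψ ∈ T ∧ .cond φ χ ∈ T :=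
  (hT.mem_congr (.cond_and φ ψ χ)).trans hT.and_mem_iff

theorem cond_mem_of_ick (hT : IsTheory Γ T) (h : ICK Γ ψ) : .cond φ ψ ∈ T := by
  have hL := isTheory_ick Γ
  have hψ : ICK Γ (cIff ψ cTop) :=
    hL.cIff_mem_iff.2 ⟨hL.imp_mem_of_mem hL.imp_self_mem, hL.imp_mem_of_mem h⟩
  exact (hT.mem_congr (.congR hψ)).2 ((hT.mem_congr (.cond_top φ)).2 hT.imp_self_mem)

theorem cond_mem_mono (hT : IsTheory Γ T) (h : ICK Γ (.imp ψ χ)) (hψ : .cond φ ψ ∈ T) :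
    .cond φ χ ∈ T := by
  have hL := isTheory_ick Γ
  have hiff : ICK Γ (cIff ψ (.and ψ χ)) :=
    hL.cIff_mem_iff.2 ⟨(hL.setOf_imp_mem ψ).and_mem_iff.2 ⟨hL.imp_self_mem, h⟩, .and_imp_left ψ χ⟩
  exact (hT.cond_and_mem_iff.1 ((hT.mem_congr (.congR hiff)).1 hψ)).2

theorem setOf_cond_mem (hT : IsTheory Γ T) (φ : CForm) : IsTheory Γ {ψ | .cond φ ψ ∈ T} where
  mem_of_ick h := hT.cond_mem_of_ick h
  mp {ψ χ} himp h := by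
    have modusPonens : ICK Γ (.imp (.and (.imp ψ χ) ψ) χ) :=
      ((isTheory_ick Γ).setOf_imp_mem _).mp (.and_imp_left _ _) (.and_imp_right _ _)
    exact hT.cond_mem_mono modusPonens (hT.cond_and_mem_iff.2 ⟨himp, h⟩)

theorem sUnion {C : Set (Set CForm)} (hC : ∀ T ∈ C, IsTheory Γ T) (hchain : IsChain (· ⊆ ·) C)
    (hne : C.Nonempty) : IsTheory Γ (⋃₀ C) where
  mem_of_ick h :=
    let ⟨S, hS⟩ := hne
    ⟨S, hS, (hC S hS).mem_of_ick h⟩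
  mp := by
    rintro φ ψ ⟨S, hS, himp⟩ ⟨S', hS', h⟩
    obtain ⟨U, hU, hSU, hS'U⟩ := hchain.directedOn S hS S' hS'
    exact ⟨U, hU, (hC U hU).mp (hSU himp) (hS'U h)⟩

end IsTheory

/-- A prime `Γ`-theory: a consistent `Γ`-theory with the disjunction property. These are the worlds
of the canonical model. -/
structure IsPrimeTheory (Γ T : Set CForm) : Prop extends IsTheory Γ T where
  bot_notMem : CForm.bot ∉ T
  mem_or_mem : ∀ {φ ψ}, CForm.or φ ψ ∈ T → φ ∈ T ∨ ψ ∈ T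

theorem IsPrimeTheory.or_mem_iff {Γ T : Set CForm} {φ ψ : CForm} (hT : IsPrimeTheory Γ T) :
    .or φ ψ ∈ T ↔ φ ∈ T ∨ ψ ∈ T :=
  ⟨hT.mem_or_mem, fun h => h.elim (hT.mp (hT.mem_of_ick (.imp_or_left φ ψ)))
    (hT.mp (hT.mem_of_ick (.imp_or_right φ ψ)))⟩

/-- The prime `Γ`-theories, as a type ordered by inclusion. -/
abbrev PrimeTheory (Γ : Set CForm) : Type := {T : Set CForm // IsPrimeTheory Γ T}

section

variable {Γ T : Set CForm} {φ ψ χ : CForm}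

theorem IsPrimeTheory.of_maximal (hT : Maximal (· ∈ {S | IsTheory Γ S ∧ χ ∉ S}) T) :
    IsPrimeTheory Γ T := by
  obtain ⟨hTh, hχ⟩ := hT.prop
  have imp_mem_of_notMem : ∀ φ, φ ∉ T → .imp φ χ ∈ T := by
    intro φ hφ
    by_contra hφχ
    have hle : T ⊆ {ψ | .imp φ ψ ∈ T} := fun _ => hTh.imp_mem_of_mem
    exact hφ (hT.le_of_ge ⟨hTh.setOf_imp_mem φ, hφχ⟩ hle hTh.imp_self_mem)
  refine ⟨hTh, fun hbot => hχ (hTh.mp (hTh.mem_of_ick (.bot_imp χ)) hbot), fun {φ ψ} hor => ?_⟩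
  by_contra! hnot
  have hφ := imp_mem_of_notMem φ hnot.1
  have hψ := imp_mem_of_notMem ψ hnot.2
  exact hχ (hTh.mp (hTh.mp (hTh.mp (hTh.mem_of_ick (.or_imp φ ψ χ)) hφ) hψ) hor)

namespace IsTheory

theorem exists_primeTheory_notMem (hT : IsTheory Γ T) (hχ : χ ∉ T) :
    ∃ M : PrimeTheory Γ, T ⊆ M.1 ∧ χ ∉ M.1 := by
  obtain ⟨M, hTM, hM⟩ := zorn_subset_nonempty {S | IsTheory Γ S ∧ χ ∉ S}
    (fun C hC hchain hne => ⟨⋃₀ C, ⟨.sUnion (fun S hS => (hC hS).1) hchain hne,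
      fun ⟨_, hS, hχS⟩ => (hC hS).2 hχS⟩, fun _ => Set.subset_sUnion_of_mem⟩) T ⟨hT, hχ⟩
  exact ⟨⟨M, .of_maximal hM⟩, hTM, hM.prop.2⟩

theorem mem_iff (hT : IsTheory Γ T) : φ ∈ T ↔ ∀ M : PrimeTheory Γ, T ⊆ M.1 → φ ∈ M.1 := by
  refine ⟨fun h M hTM => hTM h, fun h => ?_⟩
  by_contra hφ
  obtain ⟨M, hTM, hφM⟩ := hT.exists_primeTheory_notMem hφ
  exact hφM (h M hTM)

theorem imp_mem_iff (hT : IsTheory Γ T) :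
    .imp φ ψ ∈ T ↔ ∀ M : PrimeTheory Γ, T ⊆ M.1 → φ ∈ M.1 → ψ ∈ M.1 :=
  ⟨fun h M hTM => M.2.mp (hTM h), fun h => (hT.setOf_imp_mem φ).mem_iff.2 fun M hM =>
    h M (fun _ hχ => hM (hT.imp_mem_of_mem hχ)) (hM hT.imp_self_mem)⟩

theorem cond_mem_iff (hT : IsTheory Γ T) :
    .cond φ ψ ∈ T ↔ ∀ M : PrimeTheory Γ, (∀ χ, .cond φ χ ∈ T → χ ∈ M.1) → ψ ∈ M.1 :=
  (hT.setOf_cond_mem φ).mem_iff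

end IsTheory

/-! ## The canonical model -/

/-- The set of prime `Γ`-theories containing `φ`, which is the truth set of `φ` in the canonical
model. -/
def canonicalTruthSet (Γ : Set CForm) (φ : CForm) : Set (PrimeTheory Γ) := {x | φ ∈ x.1}

theorem isUpset_canonicalTruthSet (φ : CForm) :
    IsUpset (· ≤ ·) (canonicalTruthSet Γ φ) := fun _ _ hxy hx => hxy hx

theorem canonicalTruthSet_subset_iff :
    canonicalTruthSet Γ φ ⊆ canonicalTruthSet Γ ψ ↔ ICK Γ (.imp φ ψ) :=
  ⟨fun h => (isTheory_ick Γ).imp_mem_iff.2 fun _ _ hφ => h hφ,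
    fun h M => M.2.mp (M.2.mem_of_ick h)⟩

theorem canonicalTruthSet_eq_iff :
    canonicalTruthSet Γ φ = canonicalTruthSet Γ ψ ↔ ICK Γ (cIff φ ψ) := by
  rw [Set.Subset.antisymm_iff, canonicalTruthSet_subset_iff, canonicalTruthSet_subset_iff]
  exact (isTheory_ick Γ).cIff_mem_iff.symm

/-- The accessibility relations of the canonical model. A set that is not the truth set of a formula
gets the empty relation. -/
def canonicalRel (Γ : Set CForm) (a : Set (PrimeTheory Γ)) (x y : PrimeTheory Γ) : Prop :=
  ∃ φ, a = canonicalTruthSet Γ φ ∧ ∀ ψ, .cond φ ψ ∈ x.1 → ψ ∈ y.1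

theorem canonicalRel_canonicalTruthSet_iff {x y : PrimeTheory Γ} :
    canonicalRel Γ (canonicalTruthSet Γ φ) x y ↔ ∀ ψ, .cond φ ψ ∈ x.1 → ψ ∈ y.1 := by
  refine ⟨?_, fun h => ⟨φ, rfl, h⟩⟩
  rintro ⟨φ', hφ, h⟩ ψ hψ
  exact h ψ ((x.2.mem_congr (.congL (canonicalTruthSet_eq_iff.1 hφ))).1 hψ)

/-- The canonical frame of prime `Γ`-theories. Its nonemptiness amounts to the consistency of
`ICK ⊕ Γ`. -/
def canonicalFrame (Γ : Set CForm) [ne : Nonempty (PrimeTheory Γ)] : CondFrame where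
  X := PrimeTheory Γ
  ne := ne
  le := (· ≤ ·)
  le_refl := le_refl
  le_trans _ _ _ := le_trans
  R := canonicalRel Γ
  coh := fun _ _ _ _ z hxy ⟨φ, ha, h⟩ => ⟨z, ⟨φ, ha, fun ψ hψ => h ψ (hxy hψ)⟩, le_refl z⟩

theorem csat_canonicalRel (φ : CForm) :
    csat (· ≤ ·) (canonicalRel Γ) (fun p => canonicalTruthSet Γ (.var p)) φ =
      canonicalTruthSet Γ φ := by
  induction φ with
  | var => rfl
  | bot => exact (Set.eq_empty_of_forall_notMem fun x => x.2.bot_notMem).symm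
  | and _ _ ihφ ihψ =>
    simp only [csat, ihφ, ihψ]
    exact Set.ext fun x => x.2.and_mem_iff.symm
  | or _ _ ihφ ihψ =>
    simp only [csat, ihφ, ihψ]
    exact Set.ext fun x => x.2.or_mem_iff.symm
  | imp _ _ ihφ ihψ =>
    simp only [csat, ihφ, ihψ]
    exact Set.ext fun x => x.2.imp_mem_iff.symm
  | cond _ _ ihφ ihψ =>
    simp only [csat, ihφ, ihψ, canonicalRel_canonicalTruthSet_iff]
    exact Set.ext fun x => x.2.cond_mem_iff.symm

theorem ICK.of_canonicalFrame_valid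
    (h : ∀ [Nonempty (PrimeTheory Γ)], (canonicalFrame Γ).valid φ) : ICK Γ φ := by
  refine (isTheory_ick Γ).mem_iff.2 fun M _ => ?_
  have : Nonempty (PrimeTheory Γ) := ⟨M⟩
  have hM := h (fun p => canonicalTruthSet Γ (.var p)) (fun _ => isUpset_canonicalTruthSet _) M
  exact (csat_canonicalRel φ).subset hM

theorem canonicalFrame_isStrong [Nonempty (PrimeTheory Γ)] (h : axStr ∈ Γ) :
    (canonicalFrame Γ).IsStrong := by
  rintro x _ - y ⟨φ, rfl, hxy⟩
  have cond_mem : ∀ ψ, .imp φ ψ ∈ x.1 → .cond φ ψ ∈ x.1 := fun ψ =>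
    x.2.mp (x.2.mem_of_ick (.imp_cond φ ψ h))
  exact ⟨fun ψ hψ => hxy ψ (cond_mem ψ (x.2.imp_mem_of_mem hψ)),
    hxy φ (cond_mem φ x.2.imp_self_mem)⟩

end

/-- `ICK ⊕ ((p → q) → (p ⊳ q))` is sound and complete with
respect to conditional Kripke frames satisfying `R_a[x] ⊆ ↑x ∩ a` for all
worlds `x` and all upsets `a`. -/
theorem str_completeness (φ : CForm) :
    ICK {axStr} φ ↔
      ∀ F : CondFrame,
        (∀ (x : F.X) (a : Set F.X), IsUpset F.le a →
          ∀ y, F.R a x y → F.le x y ∧ y ∈ a) →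
        F.valid φ := by
  refine ⟨fun h F hF => h.sound ?_, fun h => ?_⟩
  · rintro _ rfl
    exact CondFrame.IsStrong.valid_axStr hF
  · exact .of_canonicalFrame_valid (h _ (canonicalFrame_isStrong (Set.mem_singleton axStr)))
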